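/- (Lemma 3.2(i), principal estimate.) Let n ≥ 2 and suppose Assumption A holds for the top-order coefficients. Fix σ_∞ ∈ (0,1) and let τ(x,ξ) = c₀√(|x|² − (x·v̂(ξ))²) − x·v̂(ξ) with c₀ = σ_∞/√(1−σ_∞²). Then there exists C > 0 such that for every (x,ξ) with |x| ≥ 1, ξ ≠ 0 and x^⊥_ξ ≠ 0 one has |{p₂, τ}(x,ξ) + |v(ξ)|| ≤ C⟨x⟩^{−μ}|ξ|. -/

import Mathlib

/-!
Write `d = x · v̂(ξ)` and `ρ = |x^⊥_ξ| = √(|x|² − d²)`. Since `v(ξ) · x^⊥_ξ = 0`, the gradient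
`∂_x τ = c₀ x^⊥_ξ / ρ − v̂(ξ)` satisfies `v(ξ) · ∂_x τ = −|v(ξ)|` (`sum_vv_mul_pdx_tauF`), so

`{p₂, τ} + |v(ξ)| = Σ_j ((∂_{ξ_j} p₂ − v_j) ∂_{x_j} τ − ∂_{x_j} p₂ ∂_{ξ_j} τ)`.

By the decay of `g − g₀`, the factor `∂_{ξ_j} p₂ − v_j` is `O(⟨x⟩^{−μ} |ξ|)` and `∂_{x_j} p₂` is
`O(⟨x⟩^{−μ−1} |ξ|²)`, while `∂_x τ` is bounded. It remains to see that `∂_ξ τ = O(|x| / |ξ|)`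
(`abs_pdxi_tauF_le`) although `√(|x|² − d²)` contributes a factor `1/ρ`. The cancellation comes from
`∂_{ξ_j} d = x^⊥_ξ · ∂_{ξ_j} v / |v|` (`hasFDerivAt_dotp_vhat`), which is `O(ρ / |v|)`. Finally
`|v(ξ)|` is bounded below by a multiple of `|ξ|` because `g₀` is nondegenerate
(`exists_nrm_le_vv`).
-/

open MeasureTheory Filter Topology

noncomputable section

/-- Euclidean norm of `x ∈ ℝⁿ`. -/
def nrm {n : ℕ} (x : Fin n → ℝ) : ℝ := Real.sqrt (∑ j, x j ^ 2)

/-- Japanese bracket `⟨x⟩ = (1 + |x|²)^{1/2}`. -/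
def jap {n : ℕ} (x : Fin n → ℝ) : ℝ := Real.sqrt (1 + ∑ j, x j ^ 2)

/-- Japanese bracket of a real number. -/
def japR (t : ℝ) : ℝ := Real.sqrt (1 + t ^ 2)

/-- Euclidean inner product on `ℝⁿ`. -/
def dotp {n : ℕ} (x y : Fin n → ℝ) : ℝ := ∑ j, x j * y j

/-- Partial derivative in the `j`-th coordinate direction. -/
def pd {n : ℕ} {F : Type} [NormedAddCommGroup F] [NormedSpace ℝ F]
    (j : Fin n) (f : (Fin n → ℝ) → F) (x : Fin n → ℝ) : F :=
  fderiv ℝ f x (Pi.single j 1)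

/-- Iterated partial derivatives along a list of coordinate indices
(encoding a multi-index). -/
def pdL {n : ℕ} {F : Type} [NormedAddCommGroup F] [NormedSpace ℝ F] :
    List (Fin n) → ((Fin n → ℝ) → F) → (Fin n → ℝ) → F
  | [], f => f
  | j :: L, f => pd j (pdL L f)

/-- `D_j = -i ∂_j`. -/
def Dop {n : ℕ} (j : Fin n) (φ : (Fin n → ℝ) → ℂ) (x : Fin n → ℝ) : ℂ :=
  -Complex.I * pd j φ x

/-- The Klein-Gordon type operator
`Pφ = Σ_{j,k} D_j(g^{jk} D_k φ) + (1/2) Σ_j (D_j(u_j φ) + u_j D_j φ) + u_0 φ`. -/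
def Pop {n : ℕ} (g : Fin n → Fin n → (Fin n → ℝ) → ℝ)
    (u : Fin (n + 1) → (Fin n → ℝ) → ℝ) (φ : (Fin n → ℝ) → ℂ) (x : Fin n → ℝ) : ℂ :=
  (∑ j, ∑ k, Dop j (fun y => (g j k y : ℂ) * Dop k φ y) x)
    + (1 / 2) * (∑ j, (Dop j (fun y => (u j.succ y : ℂ) * φ y) x
        + (u j.succ x : ℂ) * Dop j φ x))
    + (u 0 x : ℂ) * φ x

/-- The principal symbol `p₂(x,ξ) = Σ g^{jk}(x) ξ_j ξ_k`. -/
def p2 {n : ℕ} (g : Fin n → Fin n → (Fin n → ℝ) → ℝ) (x ξ : Fin n → ℝ) : ℝ :=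
  ∑ j, ∑ k, g j k x * ξ j * ξ k

/-- `v(ξ) = ∂_ξ p₀(ξ) = 2 g₀ ξ` for the constant cometric `g₀`. -/
def vv {n : ℕ} (g₀ : Fin n → Fin n → ℝ) (ξ : Fin n → ℝ) : Fin n → ℝ :=
  fun j => 2 * ∑ k, g₀ j k * ξ k

/-- `v̂(ξ) = v(ξ)/|v(ξ)|`. -/
def vhat {n : ℕ} (g₀ : Fin n → Fin n → ℝ) (ξ : Fin n → ℝ) : Fin n → ℝ :=
  (nrm (vv g₀ ξ))⁻¹ • vv g₀ ξ

/-- `β(x,ξ) = x̂ · v̂(ξ)`. -/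
def betaF {n : ℕ} (g₀ : Fin n → Fin n → ℝ) (x ξ : Fin n → ℝ) : ℝ :=
  dotp ((nrm x)⁻¹ • x) (vhat g₀ ξ)

/-- `x^⊥_ξ = x − (x·v̂(ξ)) v̂(ξ)`. -/
def perpx {n : ℕ} (g₀ : Fin n → Fin n → ℝ) (x ξ : Fin n → ℝ) : Fin n → ℝ :=
  x - dotp x (vhat g₀ ξ) • vhat g₀ ξ

/-- `τ(x,ξ) = c₀ √(|x|² − (x·v̂(ξ))²) − x·v̂(ξ)`. -/
def tauF {n : ℕ} (g₀ : Fin n → Fin n → ℝ) (c₀ : ℝ) (x ξ : Fin n → ℝ) : ℝ :=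
  c₀ * Real.sqrt (nrm x ^ 2 - dotp x (vhat g₀ ξ) ^ 2) - dotp x (vhat g₀ ξ)

/-- Partial derivative of a symbol in the `j`-th `x`-direction. -/
def pdx {n : ℕ} (j : Fin n) (a : (Fin n → ℝ) → (Fin n → ℝ) → ℝ) :
    (Fin n → ℝ) → (Fin n → ℝ) → ℝ :=
  fun x ξ => fderiv ℝ (fun y => a y ξ) x (Pi.single j 1)

/-- Partial derivative of a symbol in the `j`-th `ξ`-direction. -/
def pdxi {n : ℕ} (j : Fin n) (a : (Fin n → ℝ) → (Fin n → ℝ) → ℝ) :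
    (Fin n → ℝ) → (Fin n → ℝ) → ℝ :=
  fun x ξ => fderiv ℝ (fun ζ => a x ζ) ξ (Pi.single j 1)

/-- Iterated `x`-derivatives of a symbol. -/
def pdxL {n : ℕ} : List (Fin n) → ((Fin n → ℝ) → (Fin n → ℝ) → ℝ) →
    (Fin n → ℝ) → (Fin n → ℝ) → ℝ
  | [], a => a
  | j :: L, a => pdx j (pdxL L a)

/-- Iterated `ξ`-derivatives of a symbol. -/
def pdxiL {n : ℕ} : List (Fin n) → ((Fin n → ℝ) → (Fin n → ℝ) → ℝ) →
    (Fin n → ℝ) → (Fin n → ℝ) → ℝ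
  | [], a => a
  | j :: L, a => pdxi j (pdxiL L a)

/-- Poisson bracket `{a,b} = ∂_ξ a · ∂_x b − ∂_x a · ∂_ξ b`. -/
def PB {n : ℕ} (a b : (Fin n → ℝ) → (Fin n → ℝ) → ℝ) :
    (Fin n → ℝ) → (Fin n → ℝ) → ℝ :=
  fun x ξ => ∑ j, (pdxi j a x ξ * pdx j b x ξ - pdx j a x ξ * pdxi j b x ξ)

/-- The symbol class `S^{k,ℓ} = S(⟨x⟩^ℓ⟨ξ⟩^k, dx²/⟨x⟩² + dξ²/⟨ξ⟩²)`. -/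
def SymClass {n : ℕ} (k ℓ : ℝ) (a : (Fin n → ℝ) → (Fin n → ℝ) → ℝ) : Prop :=
  ContDiff ℝ (⊤ : ℕ∞) (fun p : (Fin n → ℝ) × (Fin n → ℝ) => a p.1 p.2) ∧
  ∀ Lx Lξ : List (Fin n), ∃ C > 0, ∀ x ξ,
    |pdxL Lx (pdxiL Lξ a) x ξ| ≤
      C * jap x ^ (ℓ - (Lx.length : ℝ)) * jap ξ ^ (k - (Lξ.length : ℝ))

/-- The incoming region `Γ₋(δ,σ,R)`. -/
def Gm {n : ℕ} (g₀ : Fin n → Fin n → ℝ) (δ σ R : ℝ) :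
    Set ((Fin n → ℝ) × (Fin n → ℝ)) :=
  {p | 1 - δ ≤ nrm p.2 ^ 2 ∧ nrm p.2 ^ 2 ≤ 1 + δ ∧ betaF g₀ p.1 p.2 ≤ σ ∧ R ≤ nrm p.1}

/-- The outgoing region `Γ₊(δ,σ,R)`. -/
def Gp {n : ℕ} (g₀ : Fin n → Fin n → ℝ) (δ σ R : ℝ) :
    Set ((Fin n → ℝ) × (Fin n → ℝ)) :=
  {p | 1 - δ ≤ nrm p.2 ^ 2 ∧ nrm p.2 ^ 2 ≤ 1 + δ ∧ σ ≤ betaF g₀ p.1 p.2 ∧ R ≤ nrm p.1}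

/-- Assumption A for the top-order coefficients `g^{jk}`: smooth, real-valued,
symmetric, everywhere nondegenerate, asymptotically flat with rate `⟨x⟩^{-μ-|α|}`
towards a constant nondegenerate symmetric matrix `g₀`. -/
structure AssumpG {n : ℕ} (g : Fin n → Fin n → (Fin n → ℝ) → ℝ)
    (g₀ : Fin n → Fin n → ℝ) (μ : ℝ) : Prop where
  smooth : ∀ j k, ContDiff ℝ (⊤ : ℕ∞) (g j k)
  symm : ∀ j k x, g j k x = g k j x
  nondeg : ∀ x (ξ : Fin n → ℝ), (∀ j, ∑ k, g j k x * ξ k = 0) → ξ = 0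
  symm0 : ∀ j k, g₀ j k = g₀ k j
  nondeg0 : ∀ ξ : Fin n → ℝ, (∀ j, ∑ k, g₀ j k * ξ k = 0) → ξ = 0
  decay : ∀ L : List (Fin n), ∃ C > 0, ∀ j k x,
    |pdL L (fun y => g j k y - g₀ j k) x| ≤ C * jap x ^ (-μ - (L.length : ℝ))

/-- Assumption A for the lower-order coefficients `u_j`, `j = 0,…,n`:
smooth, real-valued, with symbol-type decay `⟨x⟩^{-μ-|α|}`. -/
structure AssumpU {n : ℕ} (u : Fin (n + 1) → (Fin n → ℝ) → ℝ) (μ : ℝ) : Prop where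
  smooth : ∀ j, ContDiff ℝ (⊤ : ℕ∞) (u j)
  decay : ∀ L : List (Fin n), ∃ C > 0, ∀ j x,
    |pdL L (u j) x| ≤ C * jap x ^ (-μ - (L.length : ℝ))

/-- `∂_ξ p₂(x,ξ)` (the `x`-component of the Hamilton vector field). -/
def HamX {n : ℕ} (g : Fin n → Fin n → (Fin n → ℝ) → ℝ) (x ξ : Fin n → ℝ) :
    Fin n → ℝ :=
  fun j => fderiv ℝ (fun ζ => p2 g x ζ) ξ (Pi.single j 1)

/-- `−∂_x p₂(x,ξ)` (the `ξ`-component of the Hamilton vector field). -/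
def HamXi {n : ℕ} (g : Fin n → Fin n → (Fin n → ℝ) → ℝ) (x ξ : Fin n → ℝ) :
    Fin n → ℝ :=
  fun j => -(fderiv ℝ (fun y => p2 g y ξ) x (Pi.single j 1))

/-- Assumption B (null non-trapping): every null bicharacteristic with `ξ₀ ≠ 0`
is global and escapes to spatial infinity in both time directions. -/
def AssumptionB {n : ℕ} (g : Fin n → Fin n → (Fin n → ℝ) → ℝ) : Prop :=
  ∀ x₀ ξ₀ : Fin n → ℝ, p2 g x₀ ξ₀ = 0 → ξ₀ ≠ 0 →
    ∃ y η : ℝ → (Fin n → ℝ), y 0 = x₀ ∧ η 0 = ξ₀ ∧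
      (∀ t, HasDerivAt y (HamX g (y t) (η t)) t) ∧
      (∀ t, HasDerivAt η (HamXi g (y t) (η t)) t) ∧
      Tendsto (fun t => nrm (y t)) atTop atTop ∧
      Tendsto (fun t => nrm (y t)) atBot atTop

/-- A test function: smooth and compactly supported. -/
def IsTest {n : ℕ} (φ : (Fin n → ℝ) → ℂ) : Prop :=
  ContDiff ℝ (⊤ : ℕ∞) φ ∧ HasCompactSupport φ

end

/-! ### Euclidean geometry of `nrm` and `dotp` -/

lemma nrm_nonneg {n : ℕ} (x : Fin n → ℝ) : 0 ≤ nrm x := Real.sqrt_nonneg _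

lemma nrm_sq {n : ℕ} (x : Fin n → ℝ) : nrm x ^ 2 = ∑ j, x j ^ 2 :=
  Real.sq_sqrt (Finset.sum_nonneg fun _ _ => sq_nonneg _)

lemma abs_le_nrm {n : ℕ} (x : Fin n → ℝ) (i : Fin n) : |x i| ≤ nrm x := by
  apply Real.abs_le_sqrt
  exact Finset.single_le_sum (f := fun j => x j ^ 2) (fun _ _ => sq_nonneg _) (Finset.mem_univ i)

lemma abs_dotp_le {n : ℕ} (x y : Fin n → ℝ) : |dotp x y| ≤ nrm x * nrm y := by
  apply abs_le_of_sq_le_sq _ (mul_nonneg (nrm_nonneg x) (nrm_nonneg y))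
  rw [mul_pow, nrm_sq, nrm_sq]
  exact Finset.sum_mul_sq_le_sq_mul_sq _ _ _

lemma nrm_pos {n : ℕ} {x : Fin n → ℝ} (hx : x ≠ 0) : 0 < nrm x := by
  obtain ⟨i, hi⟩ := Function.ne_iff.mp hx
  exact (abs_pos.mpr hi).trans_le (abs_le_nrm x i)

lemma dotp_sub_smul {n : ℕ} (x w y : Fin n → ℝ) (d : ℝ) :
    dotp (x - d • w) y = dotp x y - d * dotp w y := by
  simp only [dotp, Pi.sub_apply, Pi.smul_apply, smul_eq_mul, Finset.mul_sum,
    ← Finset.sum_sub_distrib]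
  exact Finset.sum_congr rfl fun i _ => by ring

lemma nrm_sq_eq_dotp {n : ℕ} (x : Fin n → ℝ) : nrm x ^ 2 = dotp x x := by
  rw [nrm_sq]; exact Finset.sum_congr rfl fun i _ => by ring

lemma dotp_comm' {n : ℕ} (x y : Fin n → ℝ) : dotp x y = dotp y x :=
  Finset.sum_congr rfl fun _ _ => mul_comm _ _

lemma dotp_smul_right {n : ℕ} (x y : Fin n → ℝ) (c : ℝ) : dotp x (c • y) = c * dotp x y := by
  simp only [dotp, Pi.smul_apply, smul_eq_mul, Finset.mul_sum]
  exact Finset.sum_congr rfl fun i _ => by ring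

/-- Pythagoras for the orthogonal projection along a unit vector. -/
lemma nrm_sub_proj_sq {n : ℕ} (x w : Fin n → ℝ) (hw : dotp w w = 1) :
    nrm (x - dotp x w • w) ^ 2 = nrm x ^ 2 - dotp x w ^ 2 := by
  rw [nrm_sq_eq_dotp, nrm_sq_eq_dotp, dotp_sub_smul, dotp_comm' x, dotp_comm' w (_ - _),
    dotp_sub_smul, dotp_sub_smul, hw, dotp_comm' w x]
  ring

lemma dotp_vhat_self {n : ℕ} (g₀ : Fin n → Fin n → ℝ) (ξ : Fin n → ℝ) (hv : 0 < nrm (vv g₀ ξ)) :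
    dotp (vhat g₀ ξ) (vhat g₀ ξ) = 1 := by
  unfold vhat
  rw [dotp_smul_right, dotp_comm', dotp_smul_right, ← nrm_sq_eq_dotp]
  field_simp

lemma nrm_perpx {n : ℕ} (g₀ : Fin n → Fin n → ℝ) (x ξ : Fin n → ℝ) (hv : 0 < nrm (vv g₀ ξ)) :
    nrm (perpx g₀ x ξ) = √(nrm x ^ 2 - dotp x (vhat g₀ ξ) ^ 2) := by
  rw [← nrm_sub_proj_sq x _ (dotp_vhat_self g₀ ξ hv), Real.sqrt_sq (nrm_nonneg _)]
  rfl

lemma nrm_vhat {n : ℕ} (g₀ : Fin n → Fin n → ℝ) (ξ : Fin n → ℝ) (hv : 0 < nrm (vv g₀ ξ)) :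
    nrm (vhat g₀ ξ) = 1 := by
  have h := dotp_vhat_self g₀ ξ hv
  rw [← nrm_sq_eq_dotp] at h
  exact (pow_eq_one_iff_of_nonneg (nrm_nonneg _) two_ne_zero).mp h

lemma nrm_smul_vhat {n : ℕ} (g₀ : Fin n → Fin n → ℝ) (ξ : Fin n → ℝ)
    (hv : 0 < nrm (vv g₀ ξ)) : vv g₀ ξ = nrm (vv g₀ ξ) • vhat g₀ ξ := by
  unfold vhat
  rw [smul_smul, mul_inv_cancel₀ hv.ne', one_smul]

/-- Nondegeneracy of `g₀` makes `v` bounded below: `|ξ| ≤ K |v(ξ)|`. -/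
lemma exists_nrm_le_vv {n : ℕ} (g₀ : Fin n → Fin n → ℝ)
    (h0 : ∀ ξ : Fin n → ℝ, (∀ j, ∑ k, g₀ j k * ξ k = 0) → ξ = 0) :
    ∃ K > (0 : ℝ), ∀ ξ : Fin n → ℝ, nrm ξ ≤ K * nrm (vv g₀ ξ) := by
  let A : (Fin n → ℝ) →ₗ[ℝ] (Fin n → ℝ) :=
    { toFun := vv g₀
      map_add' := fun a b => by
        ext j
        simp only [vv, Pi.add_apply, mul_add, Finset.sum_add_distrib]
      map_smul' := fun c a => by
        ext j
        simp only [vv, Pi.smul_apply, smul_eq_mul, RingHom.id_apply, Finset.mul_sum]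
        exact Finset.sum_congr rfl fun i _ => by ring }
  have hA : A.ker = ⊥ := by
    rw [LinearMap.ker_eq_bot']
    intro ξ hξ
    apply h0 ξ
    intro j
    have := congrFun hξ j
    change 2 * _ = (0 : ℝ) at this
    linarith
  obtain ⟨K, hK, hanti⟩ := A.exists_antilipschitzWith hA
  refine ⟨(n + 1) * K, by positivity, fun ξ => ?_⟩
  have h1 : ‖ξ‖ ≤ K * ‖vv g₀ ξ‖ := by
    have := hanti.le_mul_dist ξ 0
    rw [map_zero, dist_zero_right, dist_zero_right] at this
    exact this
  have h2 : ‖vv g₀ ξ‖ ≤ nrm (vv g₀ ξ) := by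
    rw [pi_norm_le_iff_of_nonneg (nrm_nonneg _)]
    exact fun i => abs_le_nrm _ i
  have h3 : nrm ξ ≤ (n + 1) * ‖ξ‖ := by
    apply Real.sqrt_le_iff.mpr ⟨by positivity, ?_⟩
    calc ∑ j, ξ j ^ 2 ≤ ∑ _j : Fin n, ‖ξ‖ ^ 2 := by
          apply Finset.sum_le_sum
          intro i _
          rw [← sq_abs]
          exact pow_le_pow_left₀ (abs_nonneg _) (norm_le_pi_norm ξ i) 2
      _ = n * ‖ξ‖ ^ 2 := by simp
      _ ≤ ((n + 1) * ‖ξ‖) ^ 2 := by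
          rw [mul_pow]
          gcongr
          nlinarith [(Nat.cast_nonneg n : (0 : ℝ) ≤ n)]
  calc nrm ξ ≤ (n + 1) * ‖ξ‖ := h3
    _ ≤ (n + 1) * (K * nrm (vv g₀ ξ)) := by gcongr; exact h1.trans (by gcongr)
    _ = _ := by ring

/-! ### First derivatives of `p₂` and `τ` -/

lemma hasFDerivAt_sum_sq {n : ℕ} (x : Fin n → ℝ) :
    HasFDerivAt (fun y : Fin n → ℝ => nrm y ^ 2)
      (∑ i, (2 * x i) • (ContinuousLinearMap.proj i : (Fin n → ℝ) →L[ℝ] ℝ)) x := by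
  simp only [nrm_sq]
  apply HasFDerivAt.fun_sum
  intro i _
  have h := (hasFDerivAt_apply (𝕜 := ℝ) i x).fun_mul (hasFDerivAt_apply (𝕜 := ℝ) i x)
  simp only [← sq] at h
  refine h.congr_fderiv ?_
  rw [← add_smul, two_mul]

lemma hasFDerivAt_dotp_left {n : ℕ} (x w : Fin n → ℝ) :
    HasFDerivAt (fun y : Fin n → ℝ => dotp y w)
      (∑ i, w i • (ContinuousLinearMap.proj i : (Fin n → ℝ) →L[ℝ] ℝ)) x :=
  HasFDerivAt.fun_sum fun i _ => (hasFDerivAt_apply (𝕜 := ℝ) i x).mul_const (w i)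

lemma sum_smul_proj_single {n : ℕ} (c : Fin n → ℝ) (j : Fin n) :
    (∑ i, c i • (ContinuousLinearMap.proj i : (Fin n → ℝ) →L[ℝ] ℝ)) (Pi.single j 1) = c j := by
  simp [Pi.single_apply]

/-- `∂_x τ = c₀ x^⊥_ξ / |x^⊥_ξ| − v̂(ξ)`. -/
lemma pdx_tauF {n : ℕ} (g₀ : Fin n → Fin n → ℝ) (c₀ : ℝ) (x ξ : Fin n → ℝ)
    (hv : 0 < nrm (vv g₀ ξ)) (hp : 0 < nrm (perpx g₀ x ξ)) (j : Fin n) :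
    pdx j (tauF g₀ c₀) x ξ
      = c₀ * (perpx g₀ x ξ j / nrm (perpx g₀ x ξ)) - vhat g₀ ξ j := by
  have hρ := nrm_perpx g₀ x ξ hv
  have hR : nrm x ^ 2 - dotp x (vhat g₀ ξ) * dotp x (vhat g₀ ξ) ≠ 0 := by
    rw [hρ, Real.sqrt_pos] at hp
    rw [← sq]; exact hp.ne'
  have hd := hasFDerivAt_dotp_left x (vhat g₀ ξ)
  have h := ((((hasFDerivAt_sum_sq x).fun_sub (hd.fun_mul hd)).sqrt hR).const_mul c₀).fun_sub hd
  simp only [← sq] at h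
  have h' : HasFDerivAt (fun y => tauF g₀ c₀ y ξ) _ x := h
  rw [pdx, h'.fderiv, ← hρ]
  simp only [sub_apply, add_apply,
    smul_apply, sum_smul_proj_single, smul_eq_mul]
  have : perpx g₀ x ξ j = x j - dotp x (vhat g₀ ξ) * vhat g₀ ξ j := rfl
  rw [this]
  field_simp
  ring

/-- `∂_{ξ_j}(x · v̂(ξ)) = x^⊥_ξ · ∂_{ξ_j} v / |v(ξ)|`: the component of `∂_{ξ_j} v` along `v̂(ξ)`
drops out because `v̂` is normalised. -/
lemma hasFDerivAt_dotp_vhat {n : ℕ} (g₀ : Fin n → Fin n → ℝ) (x ξ : Fin n → ℝ)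
    (hv : 0 < nrm (vv g₀ ξ)) :
    ∃ D : (Fin n → ℝ) →L[ℝ] ℝ, HasFDerivAt (fun ζ => dotp x (vhat g₀ ζ)) D ξ ∧
      ∀ j, D (Pi.single j 1)
        = dotp (perpx g₀ x ξ) (fun i => 2 * g₀ i j) / nrm (vv g₀ ξ) := by
  have hvi : ∀ i, HasFDerivAt (fun ζ => vv g₀ ζ i)
      ((2 : ℝ) • ∑ k, g₀ i k • (ContinuousLinearMap.proj k : (Fin n → ℝ) →L[ℝ] ℝ)) ξ := fun i =>
    (HasFDerivAt.fun_sum fun k _ => (hasFDerivAt_apply (𝕜 := ℝ) k ξ).const_mul (g₀ i k)).const_mul 2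
  have hvv : HasFDerivAt (vv g₀) (ContinuousLinearMap.pi fun i =>
      ((2 : ℝ) • ∑ k, g₀ i k • (ContinuousLinearMap.proj k : (Fin n → ℝ) →L[ℝ] ℝ))) ξ :=
    hasFDerivAt_pi.mpr hvi
  have hN2 := (hasFDerivAt_sum_sq (vv g₀ ξ)).comp ξ hvv
  have hN := hN2.sqrt (by simpa using hv.ne')
  have hN' : HasFDerivAt (fun ζ => nrm (vv g₀ ζ)) _ ξ :=
    hN.congr_of_eventuallyEq (Eventually.of_forall fun ζ =>
      (Real.sqrt_sq (nrm_nonneg (vv g₀ ζ))).symm)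
  have hxv := (hasFDerivAt_dotp_left (vv g₀ ξ) x).comp ξ hvv
  have hinv := (hasDerivAt_inv hv.ne').comp_hasFDerivAt ξ hN'
  have hprod := hinv.fun_mul hxv
  have hfun : (fun ζ => dotp x (vhat g₀ ζ)) = fun ζ =>
      (Inv.inv ∘ fun ζ => nrm (vv g₀ ζ)) ζ * ((fun y => dotp y x) ∘ vv g₀) ζ := by
    funext ζ
    simp only [vhat, dotp_smul_right, Function.comp_apply, dotp_comm' _ x]
  refine ⟨_, hfun ▸ hprod, fun j => ?_⟩
  have hpi : (ContinuousLinearMap.pi fun i =>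
      ((2 : ℝ) • ∑ k, g₀ i k • (ContinuousLinearMap.proj k : (Fin n → ℝ) →L[ℝ] ℝ)))
      (Pi.single j 1) = fun i => 2 * g₀ i j := by
    funext i
    rw [ContinuousLinearMap.pi_apply, smul_apply, sum_smul_proj_single, smul_eq_mul]
  have key : ∀ c y : Fin n → ℝ,
      (∑ i, c i • (ContinuousLinearMap.proj i : (Fin n → ℝ) →L[ℝ] ℝ)) y = dotp c y := by
    intro c y
    simp [dotp]
  have key2 : dotp (fun i => 2 * vv g₀ ξ i) (fun i => 2 * g₀ i j)
      = 2 * dotp (vv g₀ ξ) (fun i => 2 * g₀ i j) := by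
    simp only [dotp, Finset.mul_sum]
    exact Finset.sum_congr rfl fun i _ => by ring
  simp only [add_apply, smul_apply, ContinuousLinearMap.comp_apply, hpi, Function.comp_apply,
    smul_eq_mul, Real.sqrt_sq (nrm_nonneg (vv g₀ ξ)), key x]
  rw [key fun i => 2 * vv g₀ ξ i, key2, perpx, dotp_sub_smul]
  simp only [vhat, dotp_smul_right]
  rw [dotp_comm' (_ • _), dotp_smul_right, dotp_comm' (vv g₀ ξ) x,
    dotp_comm' (vv g₀ ξ) (fun i => 2 * g₀ i j)]
  field_simp
  ring

lemma pdxi_tauF {n : ℕ} (g₀ : Fin n → Fin n → ℝ) (c₀ : ℝ) (x ξ : Fin n → ℝ)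
    (hv : 0 < nrm (vv g₀ ξ)) (hp : 0 < nrm (perpx g₀ x ξ)) (j : Fin n) :
    pdxi j (tauF g₀ c₀) x ξ
      = -(c₀ * (dotp x (vhat g₀ ξ) / nrm (perpx g₀ x ξ)) + 1) *
        (dotp (perpx g₀ x ξ) (fun i => 2 * g₀ i j) / nrm (vv g₀ ξ)) := by
  have hρ := nrm_perpx g₀ x ξ hv
  have hR : nrm x ^ 2 - dotp x (vhat g₀ ξ) * dotp x (vhat g₀ ξ) ≠ 0 := by
    rw [hρ, Real.sqrt_pos] at hp
    rw [← sq]; exact hp.ne'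
  obtain ⟨D, hd, hD⟩ := hasFDerivAt_dotp_vhat g₀ x ξ hv
  have h := ((((hd.fun_mul hd).const_sub (nrm x ^ 2)).sqrt hR).const_mul c₀).fun_sub hd
  simp only [← sq] at h
  have h' : HasFDerivAt (fun ζ => tauF g₀ c₀ x ζ) _ ξ := h
  rw [pdxi, h'.fderiv, ← hρ]
  simp only [sub_apply, add_apply,
    neg_apply,
    smul_apply, hD, smul_eq_mul]
  field_simp
  ring

lemma pdxi_p2 {n : ℕ} (g : Fin n → Fin n → (Fin n → ℝ) → ℝ)
    (hs : ∀ j k x, g j k x = g k j x) (x ξ : Fin n → ℝ) (j : Fin n) :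
    pdxi j (p2 g) x ξ = 2 * ∑ k, g j k x * ξ k := by
  have h : HasFDerivAt (fun ζ => p2 g x ζ) _ ξ :=
    HasFDerivAt.fun_sum fun i (_ : i ∈ Finset.univ) =>
      HasFDerivAt.fun_sum fun k (_ : k ∈ Finset.univ) =>
      ((hasFDerivAt_apply (𝕜 := ℝ) i ξ).const_mul (g i k x)).fun_mul
        (hasFDerivAt_apply (𝕜 := ℝ) k ξ)
  rw [pdxi, h.fderiv]
  simp only [sum_apply, add_apply,
    smul_apply, ContinuousLinearMap.proj_apply, Pi.single_apply, smul_eq_mul,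
    Finset.sum_add_distrib, mul_ite, mul_one, mul_zero, Finset.sum_ite_eq', Finset.mem_univ,
    if_true]
  rw [Finset.sum_comm (γ := Fin n)]
  simp only [Finset.sum_ite_eq', Finset.mem_univ, if_true, Finset.mul_sum,
    ← Finset.sum_add_distrib]
  refine Finset.sum_congr rfl fun k _ => ?_
  rw [hs k j]; ring

lemma pdx_p2 {n : ℕ} (g : Fin n → Fin n → (Fin n → ℝ) → ℝ)
    (hs : ∀ j k, ContDiff ℝ (⊤ : ℕ∞) (g j k)) (x ξ : Fin n → ℝ) (j : Fin n) :
    pdx j (p2 g) x ξ = ∑ k, ∑ l, pd j (g k l) x * ξ k * ξ l := by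
  have h : HasFDerivAt (fun y => p2 g y ξ) _ x :=
    HasFDerivAt.fun_sum fun i (_ : i ∈ Finset.univ) =>
      HasFDerivAt.fun_sum fun k (_ : k ∈ Finset.univ) =>
      ((((hs i k).differentiable (by simp)) x).hasFDerivAt.mul_const (ξ i)).mul_const (ξ k)
  rw [pdx, h.fderiv]
  simp only [sum_apply, smul_apply, smul_eq_mul, pd]
  exact Finset.sum_congr rfl fun k _ => Finset.sum_congr rfl fun l _ => by ring

/-! ### Bounds on the derivatives -/

lemma abs_pdx_tauF_le {n : ℕ} (g₀ : Fin n → Fin n → ℝ) (c₀ : ℝ) (x ξ : Fin n → ℝ)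
    (hv : 0 < nrm (vv g₀ ξ)) (hp : 0 < nrm (perpx g₀ x ξ)) (j : Fin n) :
    |pdx j (tauF g₀ c₀) x ξ| ≤ |c₀| + 1 := by
  rw [pdx_tauF g₀ c₀ x ξ hv hp]
  refine (abs_sub _ _).trans (add_le_add ?_ ?_)
  · rw [abs_mul, abs_div, abs_of_pos hp]
    exact mul_le_of_le_one_right (abs_nonneg _) ((div_le_one hp).mpr (abs_le_nrm _ j))
  · exact (abs_le_nrm _ j).trans (nrm_vhat g₀ ξ hv).le

/-- The singular factor `1/|x^⊥_ξ|` in `∂_ξ τ` is compensated by `∂_ξ(x · v̂) = O(|x^⊥_ξ|/|v|)`. -/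
lemma abs_pdxi_tauF_le {n : ℕ} (g₀ : Fin n → Fin n → ℝ) (c₀ : ℝ) (x ξ : Fin n → ℝ)
    (hv : 0 < nrm (vv g₀ ξ)) (hp : 0 < nrm (perpx g₀ x ξ)) (j : Fin n) :
    |pdxi j (tauF g₀ c₀) x ξ|
      ≤ (|c₀| + 1) * nrm x * nrm (fun i => 2 * g₀ i j) / nrm (vv g₀ ξ) := by
  rw [pdxi_tauF g₀ c₀ x ξ hv hp, ← mul_div_assoc, abs_div, abs_of_pos hv]
  refine div_le_div_of_nonneg_right ?_ hv.le
  rw [abs_mul, abs_neg]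
  have hd : |dotp x (vhat g₀ ξ)| ≤ nrm x := by
    simpa [nrm_vhat g₀ ξ hv] using abs_dotp_le x (vhat g₀ ξ)
  have hρ : nrm (perpx g₀ x ξ) ≤ nrm x := by
    rw [nrm_perpx g₀ x ξ hv]
    exact Real.sqrt_le_iff.mpr ⟨nrm_nonneg x, by linarith [sq_nonneg (dotp x (vhat g₀ ξ))]⟩
  have h1 : |c₀ * (dotp x (vhat g₀ ξ) / nrm (perpx g₀ x ξ)) + 1|
      ≤ |c₀| * (nrm x / nrm (perpx g₀ x ξ)) + 1 := by
    refine (abs_add_le _ _).trans ?_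
    rw [abs_mul, abs_div, abs_of_pos hp, abs_one]
    gcongr
  calc _ ≤ (|c₀| * (nrm x / nrm (perpx g₀ x ξ)) + 1) *
        (nrm (perpx g₀ x ξ) * nrm (fun i => 2 * g₀ i j)) :=
        mul_le_mul h1 (abs_dotp_le _ _) (abs_nonneg _) ((abs_nonneg _).trans h1)
    _ = (|c₀| * nrm x + nrm (perpx g₀ x ξ)) * nrm (fun i => 2 * g₀ i j) := by
        field_simp
    _ ≤ (|c₀| * nrm x + nrm x) * nrm (fun i => 2 * g₀ i j) :=
        mul_le_mul_of_nonneg_right (by linarith) (nrm_nonneg _)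
    _ = _ := by ring

lemma abs_pdxi_p2_sub_vv_le {n : ℕ} (g : Fin n → Fin n → (Fin n → ℝ) → ℝ)
    (g₀ : Fin n → Fin n → ℝ) (hs : ∀ j k x, g j k x = g k j x) (x ξ : Fin n → ℝ) (j : Fin n)
    (B : ℝ) (hB : ∀ j k, |g j k x - g₀ j k| ≤ B) :
    |pdxi j (p2 g) x ξ - vv g₀ ξ j| ≤ 2 * n * B * nrm ξ := by
  rw [pdxi_p2 g hs]
  have : 2 * ∑ k, g j k x * ξ k - vv g₀ ξ j = 2 * ∑ k, (g j k x - g₀ j k) * ξ k := by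
    simp only [vv, ← mul_sub, ← Finset.sum_sub_distrib, sub_mul]
  rw [this, abs_mul, abs_two]
  calc 2 * |∑ k, (g j k x - g₀ j k) * ξ k| ≤ 2 * ∑ _k : Fin n, B * nrm ξ := by
        gcongr
        refine (Finset.abs_sum_le_sum_abs _ _).trans (Finset.sum_le_sum fun k _ => ?_)
        rw [abs_mul]
        exact mul_le_mul (hB j k) (abs_le_nrm ξ k) (abs_nonneg _) ((abs_nonneg _).trans (hB j k))
    _ = _ := by simp; ring

lemma abs_pdx_p2_le {n : ℕ} (g : Fin n → Fin n → (Fin n → ℝ) → ℝ)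
    (hs : ∀ j k, ContDiff ℝ (⊤ : ℕ∞) (g j k)) (x ξ : Fin n → ℝ) (j : Fin n)
    (B : ℝ) (hB : ∀ k l, |pd j (g k l) x| ≤ B) :
    |pdx j (p2 g) x ξ| ≤ n * n * B * nrm ξ ^ 2 := by
  rw [pdx_p2 g hs]
  calc _ ≤ ∑ _k : Fin n, ∑ _l : Fin n, B * nrm ξ * nrm ξ := by
        refine (Finset.abs_sum_le_sum_abs _ _).trans (Finset.sum_le_sum fun k _ => ?_)
        refine (Finset.abs_sum_le_sum_abs _ _).trans (Finset.sum_le_sum fun l _ => ?_)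
        have hB0 : 0 ≤ B := (abs_nonneg _).trans (hB k l)
        rw [abs_mul, abs_mul]
        exact mul_le_mul (mul_le_mul (hB k l) (abs_le_nrm ξ k) (abs_nonneg _) hB0)
          (abs_le_nrm ξ l) (abs_nonneg _) (mul_nonneg hB0 (nrm_nonneg ξ))
    _ = _ := by simp; ring

/-- The unperturbed identity `{p₀, τ} = v(ξ) · ∂_x τ = −|v(ξ)|`, as `x^⊥_ξ` is orthogonal to
`v(ξ)`. -/
lemma sum_vv_mul_pdx_tauF {n : ℕ} (g₀ : Fin n → Fin n → ℝ) (c₀ : ℝ) (x ξ : Fin n → ℝ)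
    (hv : 0 < nrm (vv g₀ ξ)) (hp : 0 < nrm (perpx g₀ x ξ)) :
    ∑ j, vv g₀ ξ j * pdx j (tauF g₀ c₀) x ξ = -nrm (vv g₀ ξ) := by
  have hw := dotp_vhat_self g₀ ξ hv
  have h0 : dotp (perpx g₀ x ξ) (vhat g₀ ξ) = 0 := by
    rw [perpx, dotp_sub_smul, hw]; ring
  have h1 : ∀ j, vv g₀ ξ j * pdx j (tauF g₀ c₀) x ξ
      = nrm (vv g₀ ξ) * (c₀ / nrm (perpx g₀ x ξ)) * (perpx g₀ x ξ j * vhat g₀ ξ j)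
        - nrm (vv g₀ ξ) * (vhat g₀ ξ j * vhat g₀ ξ j) := by
    intro j
    have hj : vv g₀ ξ j = nrm (vv g₀ ξ) * vhat g₀ ξ j := congrFun (nrm_smul_vhat g₀ ξ hv) j
    rw [pdx_tauF g₀ c₀ x ξ hv hp, hj]
    ring
  simp only [h1, Finset.sum_sub_distrib, ← Finset.mul_sum]
  change _ * dotp (perpx g₀ x ξ) (vhat g₀ ξ) - _ * dotp (vhat g₀ ξ) (vhat g₀ ξ) = _
  rw [h0, hw]
  ring

lemma jap_pos {n : ℕ} (x : Fin n → ℝ) : 0 < jap x :=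
  Real.sqrt_pos.mpr (add_pos_of_pos_of_nonneg one_pos (Finset.sum_nonneg fun _ _ => sq_nonneg _))

lemma nrm_le_jap {n : ℕ} (x : Fin n → ℝ) : nrm x ≤ jap x :=
  Real.sqrt_le_sqrt (by linarith)


/-- Lemma 3.2(i), principal estimate. Under Assumption A
for the top-order coefficients, with `σ_∞ ∈ (0,1)`,
`c₀ = σ_∞/√(1−σ_∞²)` and `τ(x,ξ) = c₀√(|x|²−(x·v̂(ξ))²) − x·v̂(ξ)`, there is
`C > 0` such that `|{p₂,τ}(x,ξ) + |v(ξ)|| ≤ C⟨x⟩^{−μ}|ξ|` whenever `|x| ≥ 1`,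
`ξ ≠ 0` and `x^⊥_ξ ≠ 0`. -/
theorem stmt_9 {n : ℕ} (hn : 2 ≤ n)
    (g : Fin n → Fin n → (Fin n → ℝ) → ℝ) (g₀ : Fin n → Fin n → ℝ)
    (μ : ℝ) (hμ0 : 0 < μ) (hμ1 : μ < 1) (hg : AssumpG g g₀ μ)
    (σinf : ℝ) (hσinf : σinf ∈ Set.Ioo (0 : ℝ) 1)
    (c₀ : ℝ) (hc₀ : c₀ = σinf / Real.sqrt (1 - σinf ^ 2)) :
    ∃ C > (0 : ℝ), ∀ x ξ : Fin n → ℝ, 1 ≤ nrm x → ξ ≠ 0 → perpx g₀ x ξ ≠ 0 →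
      |PB (p2 g) (tauF g₀ c₀) x ξ + nrm (vv g₀ ξ)| ≤ C * jap x ^ (-μ) * nrm ξ := by
  obtain ⟨K, hK, hKv⟩ := exists_nrm_le_vv g₀ hg.nondeg0
  obtain ⟨C0, hC0, hdec0⟩ := hg.decay []
  choose C1 hC1 hdec1 using fun j : Fin n => hg.decay [j]
  let M : Fin n → ℝ := fun j =>
    2 * n * C0 * (|c₀| + 1) + n * n * C1 j * ((|c₀| + 1) * nrm (fun i => 2 * g₀ i j) * K)
  have hM : ∀ j, 0 ≤ M j := fun j => by
    have := nrm_nonneg (fun i => 2 * g₀ i j)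
    have := hC1 j
    positivity
  refine ⟨∑ j, M j + 1, add_pos_of_nonneg_of_pos (Finset.sum_nonneg fun j _ => hM j) one_pos, ?_⟩
  intro x ξ _ hξ hperp
  have hξ0 := nrm_pos hξ
  have hp := nrm_pos hperp
  have hv : 0 < nrm (vv g₀ ξ) := by
    by_contra h
    have := hKv ξ
    nlinarith [nrm_nonneg (vv g₀ ξ)]
  have hJ := jap_pos x
  have hJμ : 0 < jap x ^ (-μ) := Real.rpow_pos_of_pos hJ _
  have hsplit : PB (p2 g) (tauF g₀ c₀) x ξ + nrm (vv g₀ ξ)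
      = ∑ j, ((pdxi j (p2 g) x ξ - vv g₀ ξ j) * pdx j (tauF g₀ c₀) x ξ
          - pdx j (p2 g) x ξ * pdxi j (tauF g₀ c₀) x ξ) := by
    have h := sum_vv_mul_pdx_tauF g₀ c₀ x ξ hv hp
    simp only [PB, sub_mul, Finset.sum_sub_distrib, h]
    ring
  have hterm : ∀ j, |(pdxi j (p2 g) x ξ - vv g₀ ξ j) * pdx j (tauF g₀ c₀) x ξ
      - pdx j (p2 g) x ξ * pdxi j (tauF g₀ c₀) x ξ| ≤ M j * (jap x ^ (-μ) * nrm ξ) := by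
    intro j
    have a1 := abs_pdxi_p2_sub_vv_le g g₀ hg.symm x ξ j (C0 * jap x ^ (-μ)) (fun j k => by
      simpa [pdL] using hdec0 j k x)
    have a2 := abs_pdx_tauF_le g₀ c₀ x ξ hv hp j
    have a3 := abs_pdx_p2_le g hg.smooth x ξ j (C1 j * jap x ^ (-μ - 1)) (fun k l => by
      simpa [pdL, pd, fderiv_sub_const] using hdec1 j k l x)
    have a4 : |pdxi j (tauF g₀ c₀) x ξ|
        ≤ (|c₀| + 1) * nrm (fun i => 2 * g₀ i j) * K * (jap x / nrm ξ) := by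
      refine (abs_pdxi_tauF_le g₀ c₀ x ξ hv hp j).trans ?_
      rw [← mul_div_assoc, div_le_div_iff₀ hv hξ0]
      have hm := nrm_nonneg (fun i => 2 * g₀ i j)
      calc (|c₀| + 1) * nrm x * nrm (fun i => 2 * g₀ i j) * nrm ξ
          ≤ (|c₀| + 1) * jap x * nrm (fun i => 2 * g₀ i j) * (K * nrm (vv g₀ ξ)) := by
            have := nrm_le_jap x
            have := hKv ξ
            gcongr
        _ = _ := by ring
    have hJ1 : jap x ^ (-μ - 1) * jap x = jap x ^ (-μ) := by
      rw [Real.rpow_sub_one hJ.ne', div_mul_cancel₀ _ hJ.ne']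
    have hC1j := hC1 j
    have hJ' : 0 < jap x ^ (-μ - 1) := Real.rpow_pos_of_pos hJ _
    calc _ ≤ |pdxi j (p2 g) x ξ - vv g₀ ξ j| * |pdx j (tauF g₀ c₀) x ξ|
          + |pdx j (p2 g) x ξ| * |pdxi j (tauF g₀ c₀) x ξ| := by
          rw [← abs_mul, ← abs_mul]; exact abs_sub _ _
      _ ≤ (2 * n * (C0 * jap x ^ (-μ)) * nrm ξ) * (|c₀| + 1)
          + (n * n * (C1 j * jap x ^ (-μ - 1)) * nrm ξ ^ 2)
            * ((|c₀| + 1) * nrm (fun i => 2 * g₀ i j) * K * (jap x / nrm ξ)) := by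
          gcongr
      _ = M j * (jap x ^ (-μ) * nrm ξ) := by
          simp only [M]
          rw [← hJ1]
          field_simp
  rw [hsplit]
  calc _ ≤ ∑ j, M j * (jap x ^ (-μ) * nrm ξ) :=
        (Finset.abs_sum_le_sum_abs _ _).trans (Finset.sum_le_sum fun j _ => hterm j)
    _ = (∑ j, M j) * (jap x ^ (-μ) * nrm ξ) := by rw [Finset.sum_mul]
    _ ≤ (∑ j, M j + 1) * (jap x ^ (-μ) * nrm ξ) := by gcongr; linarith
    _ = _ := by ring
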